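/- Combinatorial interpretation of partial r-Bell polynomials: for sequences (a_l), (b_l) of nonnegative integers, B^{(r)}_{n+r,k+r}(a_l ; b_l) equals the number of partitions of the set {1, ..., n+r} into k+r blocks such that (i) the elements 1, ..., r lie in distinct blocks, (ii) each block of cardinality i containing none of 1,...,r is assigned one of a_i colors, and (iii) each block of cardinality i containing one of 1,...,r is assigned one of b_i colors. -/

import Mathlib

open Finset

/-- The partial `r`-Bell polynomial `B^{(r)}_{n+r,k+r}(a;b)`, defined by the explicit
formula `(n!/k!) * Σ_{n_1+...+n_{k+r}=n-k} Π_{i=1}^{r} b_{n_i+1}/n_i! *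
Π_{i=r+1}^{r+k} a_{n_i+1}/(n_i+1)!`, the sum over `(k+r)`-tuples of naturals. -/
noncomputable def rBell {A : Type*} [CommRing A] [Algebra ℚ A]
    (r k n : ℕ) (a b : ℕ → A) : A :=
  ((n.factorial : ℚ) / (k.factorial : ℚ)) •
    ∑ f ∈ Finset.Nat.antidiagonalTuple (k + r) (n - k),
      ∏ i : Fin (k + r),
        if (i : ℕ) < r then (((f i).factorial : ℚ))⁻¹ • b (f i + 1)
        else ((((f i) + 1).factorial : ℚ))⁻¹ • a (f i + 1)

lemma sum_fun_aux (m n : ℕ) (F : Fin m → ℕ → ℚ) :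
    ∑ h : Fin n → Fin m, ∏ j, F j (#{x | h x = j}) =
      (n.factorial : ℚ) * ∑ f ∈ Finset.Nat.antidiagonalTuple m n,
        ∏ j, ((f j).factorial : ℚ)⁻¹ * F j (f j) := by
  classical
  let L : MvPolynomial (Fin m) ℚ →ₗ[ℚ] ℚ :=
    (MvPolynomial.basisMonomials (Fin m) ℚ).constr ℚ (fun d => ∏ j, F j (d j))
  have hL : ∀ f : Fin m → ℕ, L (∏ j, MvPolynomial.X j ^ f j) = ∏ j, F j (f j) := by
    intro f
    have : (∏ j, MvPolynomial.X j ^ f j : MvPolynomial (Fin m) ℚ)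
        = MvPolynomial.basisMonomials (Fin m) ℚ (Finsupp.equivFunOnFinite.symm f) := by
      rw [MvPolynomial.coe_basisMonomials]
      beta_reduce
      rw [MvPolynomial.monomial_eq, Finsupp.prod_fintype]
      · simp
      · simp
    rw [this, Module.Basis.constr_basis]
    simp
  have h1 : ((∑ j : Fin m, MvPolynomial.X j) ^ n : MvPolynomial (Fin m) ℚ) =
      ∑ h : Fin n → Fin m, ∏ j, MvPolynomial.X j ^ (#{x | h x = j}) := by
    have := Finset.prod_univ_sum (fun _ : Fin n => (univ : Finset (Fin m)))
      (fun _ j => (MvPolynomial.X j : MvPolynomial (Fin m) ℚ))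
    rw [Fintype.piFinset_univ] at this
    simp only [prod_const, card_univ, Fintype.card_fin] at this
    rw [this]
    refine sum_congr rfl fun h _ => ?_
    rw [← Finset.prod_fiberwise univ h]
    refine prod_congr rfl fun j _ => ?_
    rw [prod_congr rfl (g := fun _ => MvPolynomial.X j), prod_const]
    intro x hx
    rw [(mem_filter.1 hx).2]
  have h2 := Finset.sum_pow_eq_sum_piAntidiag (univ : Finset (Fin m))
    (fun j => (MvPolynomial.X j : MvPolynomial (Fin m) ℚ)) n
  rw [h1] at h2
  have h3 := congrArg L h2
  rw [map_sum, map_sum, piAntidiag_univ_fin_eq_antidiagonalTuple] at h3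
  simp only [hL] at h3
  rw [h3, mul_sum]
  refine sum_congr rfl fun f hf => ?_
  rw [← nsmul_eq_mul, map_nsmul, hL, nsmul_eq_mul, prod_mul_distrib, ← mul_assoc]
  congr 1
  have h4 := Nat.multinomial_spec (univ : Finset (Fin m)) f
  rw [Finset.Nat.mem_antidiagonalTuple.1 hf] at h4
  rw [← h4, prod_inv_distrib]
  push_cast
  have : (∏ j, ((f j).factorial : ℚ)) ≠ 0 := prod_ne_zero_iff.2 fun j _ => by positivity
  field_simp

lemma shift_aux (n k r : ℕ) (hkn : k ≤ n) (a b : ℕ → ℚ) :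
    ∑ f ∈ Finset.Nat.antidiagonalTuple (k + r) n,
        ∏ j : Fin (k + r), ((f j).factorial : ℚ)⁻¹ *
          (if (j : ℕ) < r then b (f j + 1) else if f j = 0 then 0 else a (f j)) =
    ∑ f ∈ Finset.Nat.antidiagonalTuple (k + r) (n - k),
      ∏ i : Fin (k + r),
        if (i : ℕ) < r then (((f i).factorial : ℚ))⁻¹ • b (f i + 1)
        else ((((f i) + 1).factorial : ℚ))⁻¹ • a (f i + 1) := by
  classical
  have hcard : ∑ j : Fin (k + r), (if (j : ℕ) < r then 0 else 1) = k := by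
    rw [Fin.sum_univ_eq_sum_range (fun j => if j < r then 0 else 1), add_comm k r,
      sum_range_add]
    simp
  symm
  refine sum_of_injOn (fun f j => f j + if (j : ℕ) < r then 0 else 1) ?_ ?_ ?_ ?_
  · intro f _ g _ h
    funext j
    have := congrFun h j
    simpa using this
  · intro f hf
    simp only [mem_coe, Finset.Nat.mem_antidiagonalTuple] at hf ⊢
    rw [sum_add_distrib, hf, hcard]; omega
  · intro f hf hn
    by_contra hne
    apply hn
    rw [← ne_eq, prod_ne_zero_iff] at hne
    have hpos : ∀ j : Fin (k + r), ¬ (j : ℕ) < r → f j ≠ 0 := by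
      intro j hj h0
      apply hne j (mem_univ _)
      simp [hj, h0]
    have hfe : ∀ j : Fin (k + r), (f j - if (j : ℕ) < r then 0 else 1) +
        (if (j : ℕ) < r then 0 else 1) = f j := by
      intro j
      have := hpos j
      split_ifs with h
      · simp
      · have := this h; omega
    refine ⟨fun j => f j - if (j : ℕ) < r then 0 else 1, ?_, funext hfe⟩
    simp only [mem_coe, Finset.Nat.mem_antidiagonalTuple] at hf ⊢
    rw [← sum_congr rfl fun j _ => hfe j, sum_add_distrib, hcard] at hf
    omega
  · intro f _
    refine prod_congr rfl fun j _ => ?_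
    by_cases h : (j : ℕ) < r <;> simp [h]

/-- Admissible labellings. -/
abbrev GoodFun (n k r : ℕ) (g : Fin (n + r) → Fin (k + r)) : Prop :=
  Function.Surjective g ∧ ∀ i : Fin (n + r), (i : ℕ) < r → (g i : ℕ) = i

lemma fiber_card_aux (n k r : ℕ) (g : Fin (n + r) → Fin (k + r))
    (hg : ∀ i : Fin (n + r), (i : ℕ) < r → (g i : ℕ) = i) (j : Fin (k + r)) :
    #{x | g x = j} = #{x : Fin n | g (x.addNat r) = j} + if (j : ℕ) < r then 1 else 0 := by
  classical
  rw [← card_filter_add_card_filter_not (s := {x | g x = j}) (fun x => r ≤ (x : ℕ))]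
  congr 1
  · symm
    apply card_bij (fun x _ => x.addNat r)
    · intro x hx
      simpa using hx
    · intro x _ y _ h
      simpa using h
    · intro x hx
      simp only [mem_filter, mem_univ, true_and] at hx
      have e : (⟨x - r, by omega⟩ : Fin n).addNat r = x := by
        ext; simp; omega
      refine ⟨⟨x - r, by omega⟩, ?_, e⟩
      simp only [mem_filter, mem_univ, true_and]
      rw [e]; exact hx.1
  · split_ifs with h
    · rw [card_eq_one]
      refine ⟨⟨j, by omega⟩, ?_⟩
      ext x
      simp only [mem_filter, mem_univ, true_and, mem_singleton, not_le]
      constructor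
      · rintro ⟨h1, h2⟩
        ext
        simp [← h1, hg x h2]
      · rintro rfl
        refine ⟨?_, h⟩
        ext
        rw [hg _ h]
    · rw [card_eq_zero, filter_eq_empty_iff]
      intro x hx h2
      simp only [mem_filter, mem_univ, true_and] at hx
      have := hg x (by omega)
      rw [hx] at this
      omega

lemma restrict_aux (n k r : ℕ) (a b : ℕ → ℚ) [DecidablePred (GoodFun n k r)] :
    ∑ g with GoodFun n k r g,
      ∏ j : Fin (k + r), (if (j : ℕ) < r then b #{x | g x = j} else a #{x | g x = j}) =
    ∑ h : Fin n → Fin (k + r), ∏ j : Fin (k + r),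
      (if (j : ℕ) < r then b (#{x | h x = j} + 1) else
        if #{x | h x = j} = 0 then 0 else a #{x | h x = j}) := by
  classical
  refine sum_of_injOn (fun g x => g (x.addNat r)) ?_ ?_ ?_ ?_
  · intro g hg g' hg' h
    simp only [coe_filter, mem_univ, true_and, Set.mem_ofPred_eq] at hg hg'
    funext x
    by_cases hx : (x : ℕ) < r
    · ext
      rw [hg.2 x hx, hg'.2 x hx]
    · have := congrFun h (⟨x - r, by omega⟩ : Fin n)
      have e : (⟨x - r, by omega⟩ : Fin n).addNat r = x := by
        ext; simp; omega
      simpa only [e] using this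
  · intro g hg
    simp
  · intro h _ hn
    by_contra hne
    apply hn
    rw [← ne_eq, prod_ne_zero_iff] at hne
    let g : Fin (n + r) → Fin (k + r) := fun x =>
      if hx : (x : ℕ) < r then ⟨x, by omega⟩ else h ⟨x - r, by omega⟩
    have hgh : ∀ x : Fin n, g (x.addNat r) = h x := by
      intro x
      simp [g]
    have hgr : ∀ i : Fin (n + r), (i : ℕ) < r → (g i : ℕ) = i := by
      intro i hi
      simp [g, hi]
    refine ⟨g, ?_, funext hgh⟩
    simp only [coe_filter, mem_univ, true_and, Set.mem_ofPred_eq]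
    refine ⟨?_, hgr⟩
    intro j
    by_cases hj : (j : ℕ) < r
    · refine ⟨⟨j, by omega⟩, ?_⟩
      ext
      rw [hgr _ hj]
    · have := hne j (mem_univ _)
      rw [if_neg hj] at this
      have h2 : #{x | h x = j} ≠ 0 := by
        intro h0
        simp [h0] at this
      obtain ⟨x, hx⟩ := card_ne_zero.1 h2
      exact ⟨x.addNat r, by rw [hgh]; simpa using hx⟩
  · intro g hg
    simp only [mem_filter, mem_univ, true_and] at hg
    refine prod_congr rfl fun j _ => ?_
    have hc := fiber_card_aux n k r g hg.2 j
    by_cases h : (j : ℕ) < r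
    · simp only [h, if_true] at hc ⊢
      rw [hc]
    · simp only [h, if_false, add_zero] at hc ⊢
      rw [← hc, if_neg]
      obtain ⟨x, hx⟩ := hg.1 j
      exact card_ne_zero.2 ⟨x, by simpa using hx⟩

/-- The partition into fibers. -/
noncomputable def kerPart {N M : ℕ} (g : Fin N → Fin M) : Finpartition (univ : Finset (Fin N)) :=
  haveI : DecidableRel (Setoid.ker g) := Classical.decRel _
  Finpartition.ofSetoid (Setoid.ker g)

lemma part_kerPart {N M : ℕ} (g : Fin N → Fin M) (x : Fin N) :
    (kerPart g).part x = ({y | g y = g x} : Finset (Fin N)) := by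
  ext y
  letI : DecidableRel (Setoid.ker g) := Classical.decRel _
  rw [kerPart, Finpartition.mem_part_ofSetoid_iff_rel, Setoid.ker_def]
  simp [eq_comm]

lemma parts_eq_image_part {N : ℕ} (P : Finpartition (univ : Finset (Fin N))) :
    P.parts = univ.image P.part := by
  ext B
  simp only [mem_image, mem_univ, true_and]
  constructor
  · intro hB
    obtain ⟨x, hx⟩ := P.nonempty_of_mem_parts hB
    exact ⟨x, P.part_eq_of_mem hB hx⟩
  · rintro ⟨x, rfl⟩
    simp

lemma kerPart_eq_iff {N M : ℕ} (g : Fin N → Fin M) (P : Finpartition (univ : Finset (Fin N))) :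
    kerPart g = P ↔ ∀ x y, (g x = g y ↔ P.part x = P.part y) := by
  constructor
  · rintro rfl x y
    rw [← (kerPart g).mem_part_iff_part_eq_part (mem_univ _) (mem_univ _), part_kerPart]
    simp
  · intro h
    apply Finpartition.ext
    rw [parts_eq_image_part, parts_eq_image_part]
    congr 1
    funext x
    rw [part_kerPart]
    ext y
    rw [P.mem_part_iff_part_eq_part (mem_univ _) (mem_univ _), ← h]
    simp

lemma parts_kerPart {N M : ℕ} (g : Fin N → Fin M) (hg : Function.Surjective g) :
    (kerPart g).parts = univ.image (fun j => ({y | g y = j} : Finset (Fin N))) := by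
  rw [parts_eq_image_part]
  ext B
  simp only [mem_image, mem_univ, true_and, part_kerPart]
  constructor
  · rintro ⟨x, rfl⟩
    exact ⟨g x, rfl⟩
  · rintro ⟨j, rfl⟩
    obtain ⟨x, rfl⟩ := hg j
    exact ⟨x, rfl⟩

lemma fiber_injective {N M : ℕ} (g : Fin N → Fin M) (hg : Function.Surjective g) :
    Function.Injective (fun j => ({y | g y = j} : Finset (Fin N))) := by
  intro j j' h
  obtain ⟨x, rfl⟩ := hg j
  have : x ∈ ({y | g y = j'} : Finset (Fin N)) := by
    rw [← show ({y | g y = g x} : Finset (Fin N)) = ({y | g y = j'} : Finset (Fin N)) from h]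
    simp
  simpa using this

/-- Admissible partitions. -/
abbrev Good (n k r : ℕ) (P : Finpartition (univ : Finset (Fin (n + r)))) : Prop :=
  P.parts.card = k + r ∧
    ∀ i j : Fin (n + r), (i : ℕ) < r → (j : ℕ) < r →
      ∀ B ∈ P.parts, i ∈ B → j ∈ B → i = j

lemma good_kerPart {n k r : ℕ} {g : Fin (n + r) → Fin (k + r)} (hg : GoodFun n k r g) :
    Good n k r (kerPart g) := by
  refine ⟨?_, ?_⟩
  · rw [parts_kerPart g hg.1, card_image_of_injective _ (fiber_injective g hg.1)]
    simp
  · intro i j hi hj B hB hiB hjB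
    rw [parts_kerPart g hg.1] at hB
    simp only [mem_image, mem_univ, true_and] at hB
    obtain ⟨l, rfl⟩ := hB
    simp only [mem_filter, mem_univ, true_and] at hiB hjB
    ext
    rw [← hg.2 i hi, ← hg.2 j hj, hiB, hjB]

lemma weight_kerPart {n k r : ℕ} {g : Fin (n + r) → Fin (k + r)} (hg : GoodFun n k r g)
    (a b : ℕ → ℚ) :
    ∏ j : Fin (k + r), (if (j : ℕ) < r then b #{x | g x = j} else a #{x | g x = j}) =
    ∏ B ∈ (kerPart g).parts, (if ∃ i ∈ B, (i : ℕ) < r then b #B else a #B) := by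
  rw [parts_kerPart g hg.1, prod_image (fun _ _ _ _ h => fiber_injective g hg.1 h)]
  refine prod_congr rfl fun j _ => ?_
  congr 1
  simp only [mem_filter, mem_univ, true_and, eq_iff_iff]
  constructor
  · intro h
    obtain ⟨x, hx⟩ := hg.1 j
    refine ⟨⟨j, by omega⟩, ?_, h⟩
    ext
    exact hg.2 _ h
  · rintro ⟨i, rfl, hi⟩
    rw [hg.2 i hi]; exact hi

lemma exists_goodFun {n k r : ℕ} {P : Finpartition (univ : Finset (Fin (n + r)))}
    (hP : Good n k r P) : ∃ g, GoodFun n k r g ∧ kerPart g = P := by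
  classical
  let f : Fin (k + r) → Finset (Fin (n + r)) := fun j =>
    if h : (j : ℕ) < r then P.part ⟨j, by omega⟩ else ∅
  obtain ⟨e, he⟩ := Finset.exists_equiv_extend_of_card_eq (α := Fin (k + r)) (t := P.parts)
    (by simp [hP.1]) (s := {j : Fin (k + r) | (j : ℕ) < r}) (f := f) (by
      intro B hB
      simp only [mem_image, mem_filter, mem_univ, true_and] at hB
      obtain ⟨j, hj, rfl⟩ := hB
      simp [f, hj]) (by
      intro j hj j' hj' h
      simp only [coe_filter, mem_univ, true_and, Set.mem_ofPred_eq] at hj hj'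
      simp only [f, hj, hj', dif_pos] at h
      have := hP.2 ⟨j, by omega⟩ ⟨j', by omega⟩ hj hj' (P.part ⟨j, by omega⟩) (by simp)
        (P.mem_part (mem_univ _)) (by rw [h]; exact P.mem_part (mem_univ _))
      ext
      simpa using this)
  refine ⟨fun x => e.symm ⟨P.part x, by simp⟩, ⟨?_, ?_⟩, ?_⟩
  · intro j
    obtain ⟨x, hx⟩ := P.nonempty_of_mem_parts (e j).2
    refine ⟨x, ?_⟩
    rw [Equiv.symm_apply_eq]
    ext1
    exact P.part_eq_of_mem (e j).2 hx
  · intro i hi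
    have h1 := he ⟨i, by omega⟩ (by simpa using hi)
    have : e.symm ⟨P.part i, by simp⟩ = ⟨i, by omega⟩ := by
      rw [Equiv.symm_apply_eq]
      ext1
      rw [h1]
      simp [f, hi]
    exact congrArg Fin.val this
  · rw [kerPart_eq_iff]
    intro x y
    simp

lemma card_fixing (k r : ℕ)
    [Fintype {σ : Equiv.Perm (Fin (k + r)) // ∀ j : Fin (k + r), ¬ (r ≤ (j : ℕ)) → σ j = j}] :
    Fintype.card {σ : Equiv.Perm (Fin (k + r)) // ∀ j : Fin (k + r), ¬ (r ≤ (j : ℕ)) → σ j = j} =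
      k.factorial := by
  classical
  rw [← Fintype.card_congr (Equiv.Perm.subtypeEquivSubtypePerm
    (fun j : Fin (k + r) => r ≤ (j : ℕ))), Fintype.card_perm]
  congr 1
  have : Fintype.card (Fin k) = Fintype.card {j : Fin (k + r) // r ≤ (j : ℕ)} :=
    Fintype.card_congr
    { toFun := fun x => ⟨x.addNat r, by simp⟩
      invFun := fun j => ⟨j.1 - r, by have := j.2; omega⟩
      left_inv := fun x => by simp
      right_inv := fun j => by
        have := j.2
        ext; simp; omega }
  rw [← this, Fintype.card_fin]

lemma card_labellings {n k r : ℕ} {P : Finpartition (univ : Finset (Fin (n + r)))}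
    (hP : Good n k r P) [DecidablePred fun g => GoodFun n k r g ∧ kerPart g = P] :
    #{g | GoodFun n k r g ∧ kerPart g = P} = k.factorial := by
  classical
  obtain ⟨g₀, hg₀, hK₀⟩ := exists_goodFun hP
  rw [← card_fixing k r, ← card_univ]
  symm
  rw [kerPart_eq_iff] at hK₀
  apply card_bij (fun σ _ => fun x => σ.1 (g₀ x))
  · rintro ⟨σ, hσ⟩ -
    simp only [mem_filter, mem_univ, true_and]
    refine ⟨⟨σ.surjective.comp hg₀.1, ?_⟩, ?_⟩
    · intro i hi
      change (σ (g₀ i) : ℕ) = i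
      rw [hσ _ (by rw [hg₀.2 i hi]; omega), hg₀.2 i hi]
    · rw [kerPart_eq_iff]
      intro x y
      rw [← hK₀]
      simp
  · rintro ⟨σ, hσ⟩ - ⟨τ, hτ⟩ - h
    ext j
    obtain ⟨x, rfl⟩ := hg₀.1 j
    exact congrArg Fin.val (congrFun h x)
  · intro g hg
    simp only [mem_filter, mem_univ, true_and, kerPart_eq_iff] at hg
    obtain ⟨hg, hK⟩ := hg
    have key : ∀ x, g (Function.surjInv hg₀.1 (g₀ x)) = g x := by
      intro x
      rw [hK, ← hK₀]
      exact Function.surjInv_eq hg₀.1 _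
    have hs : Function.Surjective (fun j => g (Function.surjInv hg₀.1 j)) := by
      intro j
      obtain ⟨x, rfl⟩ := hg.1 j
      exact ⟨g₀ x, key x⟩
    refine ⟨⟨Equiv.ofBijective _ (Finite.surjective_iff_bijective.1 hs), ?_⟩, mem_univ _, ?_⟩
    · intro j hj
      simp only [Equiv.ofBijective_apply]
      have : g₀ ⟨j, by omega⟩ = j := by
        ext; rw [hg₀.2 _ (by simpa using hj)]
      conv_lhs => rw [← this]
      rw [key]
      ext; rw [hg.2 _ (by simpa using hj)]
    · funext x
      exact key x

lemma sum_labellings (n k r : ℕ) (a b : ℕ → ℚ) [DecidablePred (GoodFun n k r)]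
    [DecidablePred (Good n k r)] :
    ∑ g with GoodFun n k r g,
      ∏ j : Fin (k + r), (if (j : ℕ) < r then b #{x | g x = j} else a #{x | g x = j}) =
    (k.factorial : ℚ) * ∑ P with Good n k r P,
      ∏ B ∈ P.parts, (if ∃ i ∈ B, (i : ℕ) < r then b #B else a #B) := by
  classical
  rw [← sum_fiberwise_of_maps_to (g := kerPart) (t := {P | Good n k r P})
    (fun g hg => by simpa using good_kerPart (by simpa using hg)), mul_sum]
  refine sum_congr rfl fun P hP => ?_
  rw [filter_filter, ← card_labellings (by simpa using hP), ← nsmul_eq_mul]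
  apply sum_eq_card_nsmul
  intro g hg
  simp only [mem_filter, mem_univ, true_and] at hg
  rw [weight_kerPart hg.1, hg.2]

/-- Combinatorial interpretation: `B^{(r)}_{n+r,k+r}(a;b)` counts colored partitions of
`{1,…,n+r}` into `k+r` blocks with the first `r` elements in distinct blocks, where a
block of size `i` gets one of `a i` colors if it misses the first `r` elements and one
of `b i` colors otherwise. -/
theorem rBell_count (n k r : ℕ) (hkn : k ≤ n) (a b : ℕ → ℕ) :
    rBell r k n (fun l => (a l : ℚ)) (fun l => (b l : ℚ)) =
      (Nat.card
        (Σ P : {P : Finpartition (Finset.univ : Finset (Fin (n + r))) //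
            P.parts.card = k + r ∧
            ∀ i j : Fin (n + r), (i : ℕ) < r → (j : ℕ) < r →
              ∀ B ∈ P.parts, i ∈ B → j ∈ B → i = j},
          ∀ B : {B : Finset (Fin (n + r)) // B ∈ P.1.parts},
            Fin (if ∃ i ∈ B.1, (i : ℕ) < r then b B.1.card else a B.1.card)) : ℚ) := by
  classical
  have h1 := sum_labellings n k r (fun l => (a l : ℚ)) (fun l => (b l : ℚ))
  rw [restrict_aux n k r (fun l => (a l : ℚ)) (fun l => (b l : ℚ)), sum_fun_aux (k + r) n (fun j m => if (j : ℕ) < r then (b (m + 1) : ℚ) else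
    if m = 0 then 0 else (a m : ℚ)), shift_aux n k r hkn (fun l => (a l : ℚ))
    (fun l => (b l : ℚ))] at h1
  have hk : (k.factorial : ℚ) ≠ 0 := by positivity
  rw [rBell, smul_eq_mul, div_mul_eq_mul_div, div_eq_iff hk, h1, mul_comm]
  congr 1
  rw [Nat.card_eq_fintype_card, Fintype.card_sigma]
  push_cast
  rw [← Finset.sum_subtype_eq_sum_filter, Finset.subtype_univ]
  refine sum_congr rfl fun P _ => ?_
  rw [Fintype.card_pi, ← prod_coe_sort]
  push_cast
  refine prod_congr rfl fun B _ => ?_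
  rw [Fintype.card_fin]
  push_cast
  rfl
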